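/- Let D ⊂ ℂ be a bounded domain (nonempty, open, connected), K > 0 a constant, and u : D → [−∞, +∞) an upper semicontinuous function whose generalized Laplacian satisfies Δu(z) ≥ K u(z) at every point z ∈ D with u(z) > −∞, where Δu(z) = 4 liminf_{r→0⁺} r^{−2} [ (1/2π) ∫₀^{2π} u(z + r e^{iθ}) dθ − u(z) ]. If limsup_{z→ζ, z∈D} u(z) ≤ 0 for every boundary point ζ ∈ ∂D, then either u(z) < 0 for all z ∈ D, or u(z) = 0 for all z ∈ D. -/

import Mathlib

/-!
The theorem combines a weak maximum principle with Hopf's touching-ball argument.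

A positive supremum of `u` would be attained at some `p ∈ D` (`nonpos_of_boundary`). Circular means
around `p` do not exceed `u p` there, so `Δu(p) ≤ 0`, against `Δu(p) ≥ K u(p) > 0`. Hence `u ≤ 0`.

If `u` vanishes somewhere but not identically, connectedness gives a ball inside `{u < 0}` with a
zero `z₀ ∈ D` of `u` on its boundary (`exists_touching_ball`). In a coordinate `w = x + iy` with
origin at `z₀` and inner normal along the positive real axis, let `h = d x + 3 x² - y²`, where `d`
is the radius of the ball. Near `z₀` the set `{h ≥ 0}` meets the complement of the ball only in
`z₀`, so for small `ε > 0` the function `u + ε h` is negative on a small circle around `z₀` and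
vanishes at `z₀`. It therefore has an interior maximum `p` with `u(p) ≥ -ε h(p)`. As `h` has
Laplacian `4`, maximality gives `Δu(p) ≤ -4ε`, while `Δu(p) ≥ K u(p) ≥ -ε K h(p) > -4ε` once the
circle is so small that `K h < 4` (`no_touching_ball`).

Both maximum arguments use only `genLaplacian_le`: the generalized Laplacian of a function lying
below a quadratic polynomial that touches it is bounded by the Laplacian of the polynomial. Since
the barrier is quadratic, its circular means are exact.
-/

open Complex Set Filter MeasureTheory ENNReal

noncomputable section

/-- The positive part of an extended real number, as an element of `ℝ≥0∞`. -/
def erealPos (x : EReal) : ℝ≥0∞ := if x = ⊤ then ⊤ else ENNReal.ofReal x.toReal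

/-- Integral of an `EReal`-valued function over a set of reals: the difference of the
lower integrals of its positive and negative parts. -/
def eIntegral (s : Set ℝ) (f : ℝ → EReal) : EReal :=
  ((∫⁻ θ in s, erealPos (f θ)) : ℝ≥0∞) - ((∫⁻ θ in s, erealPos (-f θ)) : ℝ≥0∞)

/-- The circular mean `(1/2π) ∫₀^{2π} u(z + r e^{iθ}) dθ`. -/
def circMean (u : ℂ → EReal) (z : ℂ) (r : ℝ) : EReal :=
  (((2 * Real.pi)⁻¹ : ℝ) : EReal) *
    eIntegral (Set.Ioc 0 (2 * Real.pi))
      (fun θ => u (z + (r : ℂ) * Complex.exp ((θ : ℂ) * Complex.I)))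

/-- The generalized Laplacian
`Δu(z) = 4 liminf_{r→0⁺} r⁻² [(1/2π)∫₀^{2π} u(z + r e^{iθ}) dθ − u(z)]`. -/
def genLaplacian (u : ℂ → EReal) (z : ℂ) : EReal :=
  ((4 : ℝ) : EReal) *
    liminf (fun r : ℝ => (((r ^ 2)⁻¹ : ℝ) : EReal) * (circMean u z r - u z))
      (nhdsWithin 0 (Set.Ioi (0 : ℝ)))

/-! ### Circular means and quadratic comparison -/

lemma erealPos_mono {x y : EReal} (h : x ≤ y) : erealPos x ≤ erealPos y := by
  unfold erealPos
  by_cases hy : y = ⊤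
  · simp [hy]
  have hx : x ≠ ⊤ := fun hx => hy (top_le_iff.1 (hx ▸ h))
  rw [if_neg hy, if_neg hx]
  by_cases hx' : x = ⊥
  · simp [hx']
  exact ENNReal.ofReal_le_ofReal (EReal.toReal_le_toReal h hx' hy)

/-- Monotonicity needs no measurability, as it holds for both lower integrals. -/
lemma eIntegral_mono (s : Set ℝ) {f g : ℝ → EReal} (h : ∀ θ, f θ ≤ g θ) :
    eIntegral s f ≤ eIntegral s g := by
  unfold eIntegral
  refine EReal.sub_le_sub ?_ ?_
  · exact EReal.coe_ennreal_le_coe_ennreal_iff.2 (lintegral_mono fun θ => erealPos_mono (h θ))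
  · exact EReal.coe_ennreal_le_coe_ennreal_iff.2
      (lintegral_mono fun θ => erealPos_mono (EReal.neg_le_neg_iff.2 (h θ)))

lemma eIntegral_coe (s : Set ℝ) {f : ℝ → ℝ} (hf : IntegrableOn f s) :
    eIntegral s (fun θ => (f θ : EReal)) = ((∫ θ in s, f θ : ℝ) : EReal) := by
  have key : ∀ g : ℝ → ℝ, IntegrableOn g s → (∫⁻ θ in s, ENNReal.ofReal (g θ)) ≠ ⊤ := fun g hg =>
    ne_of_lt (lt_of_le_of_lt (lintegral_mono fun θ => Real.ofReal_le_enorm (g θ)) hg.2)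
  have e : ∀ x : ℝ, erealPos (x : EReal) = ENNReal.ofReal x := fun x => by simp [erealPos]
  unfold eIntegral
  simp only [← EReal.coe_neg, e]
  rw [integral_eq_lintegral_pos_part_sub_lintegral_neg_part hf, EReal.coe_sub,
    EReal.coe_ennreal_toReal (key _ hf), EReal.coe_ennreal_toReal (key (fun θ => -f θ) hf.neg)]

lemma integral_exp_mul_I (k : ℕ) (hk : k ≠ 0) :
    ∫ θ in (0 : ℝ)..(2 * Real.pi), Complex.exp ((k : ℂ) * Complex.I * θ) = 0 := by
  have hk' : (k : ℂ) ≠ 0 := by exact_mod_cast hk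
  rw [integral_exp_mul_complex (mul_ne_zero hk' I_ne_zero)]
  have : (k : ℂ) * I * ((2 * Real.pi : ℝ) : ℂ) = k * (2 * Real.pi * I) := by push_cast; ring
  rw [this, exp_nat_mul_two_pi_mul_I]
  simp

/-- The mean over a circle of a constant plus a harmonic polynomial vanishing at the centre. -/
lemma circle_integral_trig (c : ℝ) (c₁ c₂ : ℂ) (r : ℝ) :
    ∫ θ in Set.Ioc 0 (2 * Real.pi), (c + (c₁ * (r * Complex.exp ((θ : ℂ) * Complex.I)) +
      c₂ * (r * Complex.exp ((θ : ℂ) * Complex.I)) ^ 2).re) = 2 * Real.pi * c := by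
  have h0 : (0 : ℝ) ≤ 2 * Real.pi := by positivity
  rw [← intervalIntegral.integral_of_le h0, intervalIntegral.integral_add
    (by apply Continuous.intervalIntegrable; fun_prop)
    (by apply Continuous.intervalIntegrable; fun_prop)]
  have : ∫ θ in (0 : ℝ)..(2 * Real.pi), (c₁ * (r * Complex.exp ((θ : ℂ) * Complex.I)) +
      c₂ * (r * Complex.exp ((θ : ℂ) * Complex.I)) ^ 2) = 0 := by
    have e : ∀ θ : ℝ, c₁ * (r * Complex.exp ((θ : ℂ) * Complex.I)) +
        c₂ * (r * Complex.exp ((θ : ℂ) * Complex.I)) ^ 2 =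
        (c₁ * r) * Complex.exp (((1 : ℕ) : ℂ) * I * θ) +
        (c₂ * r ^ 2) * Complex.exp (((2 : ℕ) : ℂ) * I * θ) := fun θ => by
      rw [mul_pow, ← Complex.exp_nat_mul]
      ring_nf
    simp only [e]
    rw [intervalIntegral.integral_add
      (by apply Continuous.intervalIntegrable; fun_prop)
      (by apply Continuous.intervalIntegrable; fun_prop),
      intervalIntegral.integral_const_mul, intervalIntegral.integral_const_mul,
      integral_exp_mul_I 1 one_ne_zero, integral_exp_mul_I 2 two_ne_zero]
    simp
  have h2 : ∫ θ in (0 : ℝ)..(2 * Real.pi), (c₁ * (r * Complex.exp ((θ : ℂ) * Complex.I)) +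
      c₂ * (r * Complex.exp ((θ : ℂ) * Complex.I)) ^ 2).re = 0 := by
    rw [intervalIntegral.integral_of_le h0] at this ⊢
    have hi : IntegrableOn (fun θ : ℝ => c₁ * (r * Complex.exp ((θ : ℂ) * Complex.I)) +
      c₂ * (r * Complex.exp ((θ : ℂ) * Complex.I)) ^ 2) (Set.Ioc 0 (2 * Real.pi)) :=
      (Continuous.integrableOn_Icc (by fun_prop)).mono_set Ioc_subset_Icc_self
    have := (integral_re hi).trans (congrArg RCLike.re this)
    simpa using this
  rw [h2]
  simp

/-- A comparison estimate: if `u` lies below a quadratic polynomial touching it at `p`, then its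
generalized Laplacian at `p` is at most the Laplacian of that polynomial. The polynomial is written
as a harmonic part (with coefficients `c₁`, `c₂`) plus the radial term `-ε|z - p|²`. -/
lemma genLaplacian_le (u : ℂ → EReal) (p : ℂ) (c ε : ℝ) (c₁ c₂ : ℂ) (hp : u p = (c : EReal))
    (h : ∀ᶠ r : ℝ in nhdsWithin 0 (Set.Ioi (0 : ℝ)), ∀ θ : ℝ,
      u (p + (r : ℂ) * Complex.exp ((θ : ℂ) * Complex.I)) ≤
        ((c - ε * r ^ 2 + (c₁ * (r * Complex.exp ((θ : ℂ) * Complex.I)) +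
          c₂ * (r * Complex.exp ((θ : ℂ) * Complex.I)) ^ 2).re : ℝ) : EReal)) :
    genLaplacian u p ≤ ((4 * (-ε) : ℝ) : EReal) := by
  unfold genLaplacian
  rw [EReal.coe_mul]
  refine mul_le_mul_of_nonneg_left ?_ (by exact_mod_cast (by norm_num : (0 : ℝ) ≤ 4))
  refine liminf_le_of_frequently_le (Eventually.frequently ?_)
  filter_upwards [h, self_mem_nhdsWithin] with r hr hr0
  have hr0 : 0 < r := hr0
  have hm : circMean u p r ≤ ((c - ε * r ^ 2 : ℝ) : EReal) := by
    unfold circMean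
    have h1 := eIntegral_mono (Set.Ioc 0 (2 * Real.pi)) hr
    rw [eIntegral_coe _ ((Continuous.integrableOn_Icc (by fun_prop)).mono_set Ioc_subset_Icc_self),
      circle_integral_trig] at h1
    refine (mul_le_mul_of_nonneg_left h1
      (by exact_mod_cast (by positivity : (0 : ℝ) ≤ (2 * Real.pi)⁻¹))).trans (le_of_eq ?_)
    rw [← EReal.coe_mul, inv_mul_cancel_left₀ (by positivity)]
  have h2 : circMean u p r - u p ≤ ((-ε * r ^ 2 : ℝ) : EReal) := by
    refine (EReal.sub_le_sub hm (le_of_eq hp.symm)).trans (le_of_eq ?_)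
    rw [← EReal.coe_sub]
    congr 1; ring
  refine (mul_le_mul_of_nonneg_left h2
      (by exact_mod_cast (by positivity : (0 : ℝ) ≤ (r ^ 2)⁻¹))).trans (le_of_eq ?_)
  rw [← EReal.coe_mul]
  congr 1
  field_simp

/-! ### The weak maximum principle -/

/-- Compactness turns the boundary condition into attainment of the supremum: a superlevel set of
`u` at a positive level is closed in `ℂ`, because it stays away from the boundary of `D`. -/
lemma nonpos_of_boundary (D : Set ℂ) (hD : IsOpen D)
    (hDb : Bornology.IsBounded D) (K : ℝ) (hK : 0 < K) (u : ℂ → EReal)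
    (htop : ∀ z ∈ D, u z < ⊤)
    (husc : UpperSemicontinuousOn u D)
    (hΔ : ∀ z ∈ D, ⊥ < u z → ((K : ℝ) : EReal) * u z ≤ genLaplacian u z)
    (hbd : ∀ ζ ∈ frontier D, limsup u (nhdsWithin ζ D) ≤ (0 : EReal)) :
    ∀ z ∈ D, u z ≤ 0 := by
  intro z₁ hz₁
  by_contra! hpos
  set S : Set ℂ := {z ∈ D | u z₁ ≤ u z} with hS
  have hSD : S ⊆ D := fun z hz => hz.1
  have hSc : IsClosed S := by
    refine isClosed_of_closure_subset fun ζ hζ => ?_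
    have key : ¬ ∀ᶠ z in nhdsWithin ζ D, u z < u z₁ := by
      intro hev
      rw [mem_closure_iff_frequently] at hζ
      rw [eventually_nhdsWithin_iff] at hev
      obtain ⟨z, hz, hz'⟩ := (hζ.and_eventually hev).exists
      exact absurd (hz' hz.1) (not_lt.2 hz.2)
    by_cases hζD : ζ ∈ D
    · refine ⟨hζD, ?_⟩
      by_contra! hlt
      exact key (husc ζ hζD _ hlt)
    · exfalso
      have hf : ζ ∈ frontier D := by
        rw [frontier, hD.interior_eq]
        exact ⟨closure_mono hSD hζ, hζD⟩
      exact key (eventually_lt_of_limsup_lt ((hbd ζ hf).trans_lt hpos))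
  have hSk : IsCompact S := Metric.isCompact_of_isClosed_isBounded hSc (hDb.subset hSD)
  have hSne : S.Nonempty := ⟨z₁, hz₁, le_rfl⟩
  obtain ⟨p, hpS, hpmax⟩ := (husc.mono hSD).exists_isMaxOn hSne hSk
  have hpD := hSD hpS
  have hmax : ∀ z ∈ D, u z ≤ u p := fun z hz => by
    by_cases h : u z₁ ≤ u z
    · exact hpmax ⟨hz, h⟩
    · exact (not_le.1 h).le.trans hpS.2
  have hp0 : 0 < u p := hpos.trans_le hpS.2
  have hpb : ⊥ < u p := bot_le.trans_lt hp0
  obtain ⟨c, hc⟩ : ∃ c : ℝ, u p = c :=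
    ⟨(u p).toReal, (EReal.coe_toReal (htop p hpD).ne hpb.ne').symm⟩
  obtain ⟨ρ, hρ, hball⟩ := Metric.isOpen_iff.1 hD p hpD
  have hL := genLaplacian_le u p c 0 0 0 hc (by
    filter_upwards [Ioo_mem_nhdsGT hρ] with r hr θ
    have hmem : p + (r : ℂ) * Complex.exp ((θ : ℂ) * Complex.I) ∈ D := hball (by
      simp [Complex.norm_exp_ofReal_mul_I, abs_of_pos hr.1, hr.2])
    simpa [hc] using hmax _ hmem)
  have := (hΔ p hpD hpb).trans hL
  rw [hc, ← EReal.coe_mul, EReal.coe_le_coe_iff] at this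
  rw [hc] at hp0
  have hc0 : 0 < c := by exact_mod_cast hp0
  nlinarith [mul_pos hK hc0]

/-! ### Hopf's touching-ball argument -/

/-- A connected open set on which a relatively closed subset `Z` is neither empty nor everything
contains a ball free of `Z` that touches `Z` at a boundary point. -/
lemma exists_touching_ball (D Z : Set ℂ) (hD : IsOpen D) (hDc : IsConnected D) (hZD : Z ⊆ D)
    (hN : IsOpen (D \ Z)) (hZne : Z.Nonempty) (hNne : (D \ Z).Nonempty) :
    ∃ a z₀, z₀ ∈ Z ∧ a ≠ z₀ ∧ Metric.ball a (dist a z₀) ⊆ D \ Z := by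
  obtain ⟨z₁, hz₁, hz₁N⟩ : ∃ z₁ ∈ Z, z₁ ∈ closure (D \ Z) := by
    by_contra! hcon
    have hsub : D ⊆ (D \ Z) ∪ (closure (D \ Z))ᶜ := fun z hz => by
      by_cases h : z ∈ Z
      · exact Or.inr (hcon z h)
      · exact Or.inl ⟨hz, h⟩
    have h1 := hDc.isPreconnected.subset_left_of_subset_union hN isClosed_closure.isOpen_compl
      (disjoint_left.2 fun z hz hz' => hz' (subset_closure hz)) hsub
      (by obtain ⟨z, hz⟩ := hNne; exact ⟨z, hz.1, hz⟩)
    obtain ⟨z, hz⟩ := hZne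
    exact (h1 (hZD hz)).2 hz
  obtain ⟨ρ, hρ, hball⟩ := Metric.isOpen_iff.1 hD z₁ (hZD hz₁)
  obtain ⟨a, haN, hda⟩ := Metric.mem_closure_iff.1 hz₁N (ρ / 3) (by positivity)
  set C := Z ∩ Metric.closedBall z₁ (2 * ρ / 3) with hC
  have hCB : Metric.closedBall z₁ (2 * ρ / 3) ⊆ D :=
    (Metric.closedBall_subset_ball (by linarith)).trans hball
  have hCeq : C = Metric.closedBall z₁ (2 * ρ / 3) ∩ (D \ Z)ᶜ := by
    ext z
    constructor
    · rintro ⟨h1, h2⟩; exact ⟨h2, fun h => h.2 h1⟩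
    · rintro ⟨h1, h2⟩
      refine ⟨?_, h1⟩
      by_contra h
      exact h2 ⟨hCB h1, h⟩
  have hCk : IsCompact C := by
    rw [hCeq]; exact (isCompact_closedBall _ _).inter_right hN.isClosed_compl
  have hz₁C : z₁ ∈ C := ⟨hz₁, Metric.mem_closedBall_self (by positivity)⟩
  obtain ⟨z₀, hz₀, hmin⟩ := hCk.exists_isMinOn (Set.nonempty_of_mem hz₁C)
    (continuous_const.dist continuous_id : Continuous fun z => dist a z).continuousOn
  have hd1 : dist a z₀ ≤ dist a z₁ := hmin hz₁C
  rw [dist_comm] at hda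
  refine ⟨a, z₀, hz₀.1, fun h => haN.2 (h ▸ hz₀.1), fun z hz => ?_⟩
  have hz' : dist z a < dist a z₀ := hz
  have hzB : z ∈ Metric.closedBall z₁ (2 * ρ / 3) := by
    rw [Metric.mem_closedBall]
    linarith [dist_triangle z a z₁]
  refine ⟨hCB hzB, fun hzZ => ?_⟩
  have h3 : dist a z₀ ≤ dist a z := hmin ⟨hzZ, hzB⟩
  rw [dist_comm a z] at h3
  linarith

/-- The quadratic barrier at `z₀`, written in the coordinate `w = (z - z₀) m` in which the inner
normal is the positive real axis: `d Re w + 3 (Re w)² - (Im w)²`. -/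
def barrier (z₀ m : ℂ) (d : ℝ) (z : ℂ) : ℝ :=
  d * ((z - z₀) * m).re + 3 * ((z - z₀) * m).re ^ 2 - ((z - z₀) * m).im ^ 2

lemma continuous_barrier (z₀ m : ℂ) (d : ℝ) : Continuous (barrier z₀ m d) := by
  unfold barrier; fun_prop

/-- The Taylor expansion of the barrier: a harmonic part plus `|η|²`, so its Laplacian is `4`. -/
lemma barrier_add (z₀ m : ℂ) (hm : ‖m‖ = 1) (d : ℝ) (p : ℂ) : ∃ c₁ c₂ : ℂ, ∀ η : ℂ,
    barrier z₀ m d (p + η) = barrier z₀ m d p + (c₁ * η + c₂ * η ^ 2).re + ‖η‖ ^ 2 := by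
  refine ⟨d * m + 2 * (starRingEnd ℂ) ((p - z₀) * m) * m + 4 * ((p - z₀) * m) * m, 2 * m ^ 2,
    fun η => ?_⟩
  have h1 : ‖η‖ ^ 2 = (η * m).re ^ 2 + (η * m).im ^ 2 := by
    have : ‖η‖ ^ 2 = ‖η * m‖ ^ 2 := by rw [norm_mul, hm, mul_one]
    rw [this, ← normSq_eq_norm_sq, normSq_apply]; ring
  have h2 : (p + η - z₀) * m = (p - z₀) * m + η * m := by ring
  have h3 : (d * m + 2 * (starRingEnd ℂ) ((p - z₀) * m) * m + 4 * ((p - z₀) * m) * m) * η +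
      2 * m ^ 2 * η ^ 2 = d * (η * m) + 2 * ((starRingEnd ℂ) ((p - z₀) * m) * (η * m)) +
        4 * (((p - z₀) * m) * (η * m)) + 2 * ((η * m) * (η * m)) := by ring
  unfold barrier
  rw [h1, h2, h3]
  generalize (p - z₀) * m = w
  generalize η * m = v
  simp
  ring

/-- Close to `z₀`, and apart from `z₀`, the barrier is nonnegative only inside the tangent ball of radius `d`, whose
centre is `d` in the coordinate `w`. -/
lemma norm_sub_lt_of_barrier_nonneg {w : ℂ} {d : ℝ} (hd : 0 < d) (hw : ‖w‖ ≤ d / 8) (hw0 : w ≠ 0)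
    (h : 0 ≤ d * w.re + 3 * w.re ^ 2 - w.im ^ 2) : ‖w - d‖ < d := by
  have hre := abs_le.1 ((abs_re_le_norm w).trans hw)
  have hx : 0 < w.re := by
    by_contra! hx
    have hle : w.re * (d + 4 * w.re) ≤ 0 := mul_nonpos_of_nonpos_of_nonneg hx (by linarith)
    have h1 : w.re ^ 2 + w.im ^ 2 ≤ 0 := by nlinarith
    exact hw0 (Complex.ext (by simp; nlinarith [sq_nonneg w.im, sq_nonneg w.re])
      (by simp; nlinarith [sq_nonneg w.im, sq_nonneg w.re]))
  have h2 : ‖w - d‖ ^ 2 < d ^ 2 := by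
    rw [← normSq_eq_norm_sq, normSq_apply]
    simp
    nlinarith [mul_le_mul_of_nonneg_left hre.2 hx.le, mul_pos hx hd]
  exact lt_of_pow_lt_pow_left₀ 2 hd.le h2

lemma exists_pos_forall_le_neg {u : ℂ → EReal} {T : Set ℂ} (hT : IsCompact T)
    (hu : UpperSemicontinuousOn u T) (hneg : ∀ z ∈ T, u z < 0) :
    ∃ δ : ℝ, 0 < δ ∧ ∀ z ∈ T, u z ≤ ((-δ : ℝ) : EReal) := by
  rcases T.eq_empty_or_nonempty with rfl | hne
  · exact ⟨1, one_pos, by simp⟩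
  obtain ⟨p, hp, hmax⟩ := hu.exists_isMaxOn hne hT
  obtain ⟨x, hx, hx0⟩ := EReal.lt_iff_exists_real_btwn.1 (hneg p hp)
  have hx0 : x < 0 := by exact_mod_cast hx0
  exact ⟨-x, by linarith, fun z hz => by rw [neg_neg]; exact (hmax hz).trans hx.le⟩

/-- Hopf's argument: a nonpositive `u` that vanishes at `z₀` cannot be negative throughout a ball
with `z₀` on its boundary, since `u + ε · barrier` would have an interior maximum at a point
violating the differential inequality. -/
lemma no_touching_ball (D : Set ℂ) (hD : IsOpen D) (K : ℝ) (hK : 0 < K) (u : ℂ → EReal)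
    (husc : UpperSemicontinuousOn u D)
    (hΔ : ∀ z ∈ D, ⊥ < u z → ((K : ℝ) : EReal) * u z ≤ genLaplacian u z)
    (hle : ∀ z ∈ D, u z ≤ 0) (a z₀ : ℂ) (hz₀ : z₀ ∈ D) (hu₀ : u z₀ = 0) (haz : a ≠ z₀)
    (hball : ∀ z ∈ Metric.ball a (dist a z₀), u z < 0) : False := by
  set d := dist a z₀ with hd_def
  have hd : 0 < d := dist_pos.2 haz
  obtain ⟨ρ, hρ, hρD⟩ := Metric.isOpen_iff.1 hD z₀ hz₀
  obtain ⟨s, hs, hsρ, hsd, hsK⟩ : ∃ s : ℝ, 0 < s ∧ s < ρ ∧ s ≤ d / 8 ∧ K * (2 * d * s) < 4 := by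
    refine ⟨min (ρ / 2) (min (d / 8) (1 / (K * d))), by positivity,
      (min_le_left _ _).trans_lt (by linarith),
      (min_le_right _ _).trans (min_le_left _ _), ?_⟩
    have h1 : min (ρ / 2) (min (d / 8) (1 / (K * d))) ≤ 1 / (K * d) :=
      (min_le_right _ _).trans (min_le_right _ _)
    rw [le_div_iff₀ (by positivity)] at h1
    nlinarith
  have hBD : Metric.closedBall z₀ s ⊆ D := (Metric.closedBall_subset_ball hsρ).trans hρD
  -- The unit factor rotating the inner normal `a - z₀` onto the positive real axis.
  set m : ℂ := (starRingEnd ℂ) (a - z₀) / d with hm_def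
  have hnorm : ‖a - z₀‖ = d := by rw [hd_def, dist_eq_norm]
  have hm : ‖m‖ = 1 := by
    rw [hm_def, norm_div, RCLike.norm_conj, hnorm, Complex.norm_real, Real.norm_of_nonneg hd.le,
      div_self hd.ne']
  have ham : (a - z₀) * m = d := by
    rw [hm_def, mul_div_assoc', mul_conj, normSq_eq_norm_sq, hnorm,
      div_eq_iff (by exact_mod_cast hd.ne')]
    push_cast; ring
  set h := barrier z₀ m d with hh
  have hwn : ∀ z, ‖(z - z₀) * m‖ = dist z z₀ := fun z => by
    rw [norm_mul, hm, mul_one, dist_eq_norm]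
  have hhlt : ∀ z ∈ Metric.closedBall z₀ s, h z < 2 * d * s := fun z hz => by
    have h1 : ‖(z - z₀) * m‖ ≤ s := (hwn z).trans_le hz
    have h2 := abs_le.1 ((abs_re_le_norm _).trans h1)
    simp only [hh, barrier]
    nlinarith [sq_nonneg ((z - z₀) * m).im, mul_pos hd hs]
  have htan : ∀ z ∈ Metric.closedBall z₀ s, z ≠ z₀ → 0 ≤ h z → u z < 0 := fun z hz hne hz0 => by
    refine hball z ?_
    have h1 := norm_sub_lt_of_barrier_nonneg hd (((hwn z).trans_le hz).trans hsd)
      (mul_ne_zero (sub_ne_zero.2 hne) (norm_ne_zero_iff.1 (by rw [hm]; exact one_ne_zero))) hz0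
    have h2 : (z - z₀) * m - d = (z - a) * m := by rw [← ham]; ring
    rwa [h2, norm_mul, hm, mul_one, ← dist_eq_norm] at h1
  have hhc : Continuous h := continuous_barrier z₀ m d
  have hh0 : h z₀ = 0 := by simp [hh, barrier]
  set T := Metric.sphere z₀ s ∩ {z | 0 ≤ h z} with hT_def
  have hTB : T ⊆ Metric.closedBall z₀ s := fun z hz => Metric.sphere_subset_closedBall hz.1
  have hT : IsCompact T := (isCompact_sphere z₀ s).inter_right (isClosed_le continuous_const hhc)
  obtain ⟨δ, hδ, hδT⟩ := exists_pos_forall_le_neg hT (husc.mono (hTB.trans hBD))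
    (fun z hz => htan z (hTB hz) (Metric.ne_of_mem_sphere hz.1 hs.ne') hz.2)
  -- With this choice `ε h < δ` on the closed disc, so `u + ε h` is negative on the sphere.
  set ε := δ / (2 * d * s) with hε_def
  have hε : 0 < ε := by positivity
  have hεh : ∀ z ∈ Metric.closedBall z₀ s, ε * h z < δ := fun z hz => by
    calc ε * h z < ε * (2 * d * s) := mul_lt_mul_of_pos_left (hhlt z hz) hε
      _ = δ := by rw [hε_def]; field_simp
  have hwusc : UpperSemicontinuousOn (fun z => u z + ((ε * h z : ℝ) : EReal))
      (Metric.closedBall z₀ s) := by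
    refine (husc.mono hBD).add' ?_ fun z _ => EReal.continuousAt_add
      (Or.inr (EReal.coe_ne_bot _)) (Or.inr (EReal.coe_ne_top _))
    exact (continuous_coe_real_ereal.comp
      (continuous_const.mul hhc)).upperSemicontinuous.upperSemicontinuousOn _
  have hz₀B : z₀ ∈ Metric.closedBall z₀ s := Metric.mem_closedBall_self hs.le
  obtain ⟨p, hpB, hpmax⟩ := hwusc.exists_isMaxOn ⟨z₀, hz₀B⟩ (isCompact_closedBall z₀ s)
  have hpD := hBD hpB
  have hp0 : (0 : EReal) ≤ u p + ((ε * h p : ℝ) : EReal) := by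
    have := hpmax hz₀B
    simpa [hu₀, hh0] using this
  have hpb : u p ≠ ⊥ := by
    intro hb
    simp [hb] at hp0
  have hpt : u p ≠ ⊤ := ((hle p hpD).trans_lt EReal.zero_lt_top).ne
  obtain ⟨c, hc⟩ : ∃ c : ℝ, u p = c := ⟨(u p).toReal, (EReal.coe_toReal hpt hpb).symm⟩
  rw [hc, ← EReal.coe_add] at hp0
  have hp0 : 0 ≤ c + ε * h p := by exact_mod_cast hp0
  have hc0 : c ≤ 0 := by
    have := hle p hpD
    rw [hc] at this
    exact_mod_cast this
  have hpin : dist p z₀ < s := by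
    refine lt_of_le_of_ne hpB fun hps => ?_
    by_cases hhp : 0 ≤ h p
    · have h1 := hδT p ⟨hps, hhp⟩
      rw [hc, EReal.coe_le_coe_iff] at h1
      linarith [hεh p hpB]
    · nlinarith [mul_pos hε (neg_pos.2 (not_le.1 hhp))]
  obtain ⟨c₁, c₂, hexp⟩ := barrier_add z₀ m hm d p
  have hL := genLaplacian_le u p c ε (-ε * c₁) (-ε * c₂) hc (by
    filter_upwards [Ioo_mem_nhdsGT (sub_pos.2 hpin)] with r hr θ
    set η := (r : ℂ) * Complex.exp ((θ : ℂ) * Complex.I) with hη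
    have hηn : ‖η‖ = r := by
      rw [hη, norm_mul, Complex.norm_exp_ofReal_mul_I, Complex.norm_real,
        Real.norm_of_nonneg hr.1.le, mul_one]
    have hmem : p + η ∈ Metric.closedBall z₀ s := by
      rw [Metric.mem_closedBall, dist_eq_norm, add_sub_right_comm]
      have := norm_add_le (p - z₀) η
      rw [← dist_eq_norm, hηn] at this
      linarith [hr.2]
    have h1 : u (p + η) + ((ε * h (p + η) : ℝ) : EReal) ≤ ((c + ε * h p : ℝ) : EReal) := by
      have := hpmax hmem
      simpa only [mem_ofPred_eq, hc, ← EReal.coe_add] using this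
    have h2 : u (p + η) ≤ ((c + ε * h p - ε * h (p + η) : ℝ) : EReal) := by
      rw [EReal.coe_sub (c + ε * h p)]
      exact (EReal.le_sub_iff_add_le (Or.inl (EReal.coe_ne_bot _))
        (Or.inl (EReal.coe_ne_top _))).2 h1
    refine h2.trans (EReal.coe_le_coe_iff.2 (le_of_eq ?_))
    have h3 : (-ε * c₁ * η + -ε * c₂ * η ^ 2) = ((-ε : ℝ) : ℂ) * (c₁ * η + c₂ * η ^ 2) := by
      push_cast; ring
    rw [h3, re_ofReal_mul, hh, hexp η, hηn]
    ring)
  have hfin := (hΔ p hpD (bot_lt_iff_ne_bot.2 hpb)).trans hL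
  rw [hc, ← EReal.coe_mul, EReal.coe_le_coe_iff] at hfin
  have h4 : K * (-(ε * h p)) ≤ K * c := mul_le_mul_of_nonneg_left (by linarith) hK.le
  have h5 : ε * (K * h p) < ε * 4 :=
    mul_lt_mul_of_pos_left ((mul_lt_mul_of_pos_left (hhlt p hpB) hK).trans hsK) hε
  nlinarith

/-! ### The maximum principle -/

/-- **Minda's maximum principle.** Let `D ⊂ ℂ` be a bounded domain, `K > 0`, and
`u : D → [−∞, ∞)` upper semicontinuous with `Δu(z) ≥ K u(z)` wherever `u(z) > −∞`.
If `limsup_{z → ζ} u(z) ≤ 0` at every boundary point `ζ`, then either `u < 0`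
throughout `D` or `u ≡ 0` on `D`. -/
theorem minda_maximum_principle (D : Set ℂ) (hD : IsOpen D) (hDc : IsConnected D)
    (hDb : Bornology.IsBounded D) (K : ℝ) (hK : 0 < K) (u : ℂ → EReal)
    (htop : ∀ z ∈ D, u z < ⊤)
    (husc : UpperSemicontinuousOn u D)
    (hΔ : ∀ z ∈ D, ⊥ < u z → ((K : ℝ) : EReal) * u z ≤ genLaplacian u z)
    (hbd : ∀ ζ ∈ frontier D, limsup u (nhdsWithin ζ D) ≤ (0 : EReal)) :
    (∀ z ∈ D, u z < 0) ∨ (∀ z ∈ D, u z = 0) := by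
  have hle := nonpos_of_boundary D hD hDb K hK u htop husc hΔ hbd
  by_contra! hcon
  obtain ⟨⟨z₁, hz₁, h₁⟩, z₂, hz₂, h₂⟩ := hcon
  have hN : D \ {z ∈ D | u z = 0} = {z ∈ D | u z < 0} := by
    ext z
    constructor
    · rintro ⟨hz, h⟩
      exact ⟨hz, lt_of_le_of_ne (hle z hz) fun h0 => h ⟨hz, h0⟩⟩
    · rintro ⟨hz, h⟩
      exact ⟨hz, fun h0 => h.ne h0.2⟩
  have hNo : IsOpen (D \ {z ∈ D | u z = 0}) := by
    rw [hN, isOpen_iff_mem_nhds]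
    rintro z ⟨hz, h⟩
    have := husc z hz 0 h
    rw [hD.nhdsWithin_eq hz] at this
    filter_upwards [this, hD.mem_nhds hz] with y h1 h2 using ⟨h2, h1⟩
  obtain ⟨a, z₀, hz₀, haz, hball⟩ := exists_touching_ball D {z ∈ D | u z = 0} hD hDc
    (fun z hz => hz.1) hNo ⟨z₁, hz₁, le_antisymm (hle z₁ hz₁) h₁⟩ ⟨z₂, hz₂, fun h => h₂ h.2⟩
  rw [hN] at hball
  exact no_touching_ball D hD K hK u husc hΔ hle a z₀ hz₀.1 hz₀.2 haz fun z hz => (hball hz).2
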